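/- For every t > T₁ one has F(v(t)) ≥ t − T₁, hence v(t) ≤ F⁻¹(t − T₁) where F⁻¹ : (0,∞) → (0,∞) denotes the inverse of the strictly decreasing bijection F. Consequently, for every δ > 0, setting τ := F(δ), every such solution v (for an arbitrary initial value v₀ > 0) satisfies 0 < v(t) ≤ δ for all t ≥ T₁ + τ. -/

import Mathlib

open MeasureTheory

/-!
Substituting `σ = v t`, a positive solution of `v' = -f(v)` takes time `∫ σ in v b..v a, 1 / f σ` to
descend from `v a` to `v b`, so `F (v b) = F (v a) + (b - a)`; this bounds `F (v b)` from below
because `F > 0`. Positivity persists because `F` is unbounded near `0`: before reaching `0` the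
solution would have to cross a level that it cannot reach in the time available. The substitution is
the change of variables for the antitone function `v` in the Lebesgue integral, which replaces the
chain rule for `F ∘ v`.
-/

section

open Set

lemma exists_first_eq_of_continuousOn {α β : Type*}
    [ConditionallyCompleteLinearOrder α] [TopologicalSpace α] [OrderTopology α] [DenselyOrdered α]
    [LinearOrder β] [TopologicalSpace β] [OrderClosedTopology β]
    {v : α → β} {a b : α} {s : β} (hab : a ≤ b) (hv : ContinuousOn v (Icc a b))
    (hb : v b ≤ s) (ha : s ≤ v a) :
    ∃ r ∈ Icc a b, v r = s ∧ ∀ t ∈ Ico a r, s < v t := by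
  have hcompact : IsCompact (Icc a b ∩ v ⁻¹' {s}) :=
    isCompact_Icc.of_isClosed_subset
      (hv.preimage_isClosed_of_isClosed isClosed_Icc isClosed_singleton) inter_subset_left
  obtain ⟨r, ⟨hr, hvr⟩, hleast⟩ :=
    hcompact.exists_isLeast (intermediate_value_Icc' hab hv ⟨hb, ha⟩)
  refine ⟨r, hr, hvr, fun t ht => ?_⟩
  by_contra! hts
  have htb : t ≤ b := ht.2.le.trans hr.2
  obtain ⟨q, hq, hvq⟩ :=
    intermediate_value_Icc' ht.1 (hv.mono (Icc_subset_Icc_right htb)) ⟨hts, ha⟩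
  exact (hq.2.trans_lt ht.2).not_ge (hleast ⟨⟨hq.1, hq.2.trans htb⟩, hvq⟩)

lemma integrableOn_Ici_of_continuousOn_Ioi {E : Type*} [NormedAddCommGroup E]
    {g : ℝ → E} {a c s : ℝ}
    (hg : ContinuousOn g (Ioi a)) (hint : IntegrableOn g (Ici c)) (hs : a < s) :
    IntegrableOn g (Ici s) :=
  integrableOn_Ici_iff_integrableAtFilter_atTop.2
    ⟨⟨Ici c, Filter.Ici_mem_atTop c, hint⟩,
      (hg.mono (Ici_subset_Ioi.2 hs)).locallyIntegrableOn measurableSet_Ici⟩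

lemma integral_one_div_eq_sub_of_hasDerivAt_neg {f v : ℝ → ℝ} {a b : ℝ} (hab : a ≤ b)
    (hv : ContinuousOn v (Icc a b)) (hode : ∀ t ∈ Ioo a b, HasDerivAt v (-(f (v t))) t)
    (hpos : ∀ t ∈ Ioo a b, 0 < f (v t)) :
    ∫ σ in v b..v a, 1 / f σ = b - a := by
  have hsubst : ∫ t in a..b, 1 / f (v t) * -(f (v t)) = ∫ σ in v a..v b, 1 / f σ := by
    apply intervalIntegral.integral_comp_mul_deriv_of_deriv_nonpos (g := fun σ => 1 / f σ)
    · rwa [uIcc_of_le hab]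
    · rwa [min_eq_left hab, max_eq_right hab]
    · rw [min_eq_left hab, max_eq_right hab]
      exact fun t ht => (neg_neg_of_pos (hpos t ht)).le
  have hconst : ∫ t in a..b, 1 / f (v t) * -(f (v t)) = -(b - a) :=
    calc ∫ t in a..b, 1 / f (v t) * -(f (v t))
      _ = ∫ _ in a..b, (-1 : ℝ) :=
        intervalIntegral.integral_congr_Ioo_of_le hab fun t ht => by
          rw [mul_neg, one_div_mul_cancel (hpos t ht).ne']
      _ = -(b - a) := by rw [intervalIntegral.integral_const, smul_eq_mul, mul_neg_one]
  rw [intervalIntegral.integral_symm, ← hsubst, hconst, neg_neg]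

/-- The function `F` of the theorem: `descentTime f s` is the time a solution of `v' = -f(v)`
takes to come down from `+∞` to the level `s`. It is `0` if `1 / f` is not integrable on
`[s, ∞)`. -/
noncomputable def descentTime (f : ℝ → ℝ) (s : ℝ) : ℝ := ∫ σ in Ici s, 1 / f σ

namespace descentTime

variable {f : ℝ → ℝ}

lemma sub_eq_integral {s u : ℝ} (hs : IntegrableOn (fun σ => 1 / f σ) (Ici s))
    (hu : IntegrableOn (fun σ => 1 / f σ) (Ici u)) :
    descentTime f s - descentTime f u = ∫ σ in s..u, 1 / f σ := by
  simp only [descentTime, integral_Ici_eq_integral_Ioi]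
  exact intervalIntegral.integral_Ioi_sub_Ioi'
    (hs.mono_set Ioi_subset_Ici_self) (hu.mono_set Ioi_subset_Ici_self)

section Positive

variable (hpos : ∀ s, 0 < s → 0 < f s)
  (hint : ∀ s, 0 < s → IntegrableOn (fun σ => 1 / f σ) (Ici s))

include hpos

lemma nonneg {s : ℝ} (hs : 0 < s) : 0 ≤ descentTime f s :=
  setIntegral_nonneg measurableSet_Ici fun σ hσ =>
    (one_div_pos.2 (hpos σ (hs.trans_le hσ))).le

include hint

lemma strictAntiOn : StrictAntiOn (descentTime f) (Ioi 0) := by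
  intro s hs u hu hsu
  rw [← sub_pos, sub_eq_integral (hint s hs) (hint u hu)]
  refine intervalIntegral.intervalIntegral_pos_of_pos_on ?_
    (fun σ hσ => one_div_pos.2 (hpos σ (lt_trans hs hσ.1))) hsu
  rw [intervalIntegrable_iff_integrableOn_Icc_of_le hsu.le]
  exact (hint s hs).mono_set Icc_subset_Ici_self

lemma pos {s : ℝ} (hs : 0 < s) : 0 < descentTime f s :=
  have hs' : 0 < s + 1 := by positivity
  (nonneg hpos hs').trans_lt (strictAntiOn hpos hint hs hs' (lt_add_one s))

variable {v : ℝ → ℝ} {a b : ℝ}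

lemma comp_eq_add (hab : a ≤ b) (hv : ContinuousOn v (Icc a b))
    (hode : ∀ t ∈ Ioo a b, HasDerivAt v (-(f (v t))) t) (hvpos : ∀ t ∈ Icc a b, 0 < v t) :
    descentTime f (v b) = descentTime f (v a) + (b - a) := by
  rw [← integral_one_div_eq_sub_of_hasDerivAt_neg hab hv hode
      fun t ht => hpos _ (hvpos t (Ioo_subset_Icc_self ht)),
    ← sub_eq_integral (hint _ (hvpos b (right_mem_Icc.2 hab)))
      (hint _ (hvpos a (left_mem_Icc.2 hab)))]
  ring

lemma pos_of_hasDerivAt_neg (hunbdd : ¬ BddAbove (descentTime f '' Ioi 0)) (hab : a ≤ b)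
    (hv : ContinuousOn v (Icc a b)) (hode : ∀ t ∈ Ioo a b, HasDerivAt v (-(f (v t))) t)
    (hva : 0 < v a) : 0 < v b := by
  by_contra! hvb
  obtain ⟨_, ⟨s, hs, rfl⟩, hlate⟩ :=
    not_bddAbove_iff.1 hunbdd (descentTime f (v a) + (b - a))
  have hsa : s < v a :=
    ((strictAntiOn hpos hint).lt_iff_gt hva hs).1 (by linarith)
  obtain ⟨r, hr, rfl, habove⟩ :=
    exists_first_eq_of_continuousOn hab hv (hvb.trans (le_of_lt hs)) hsa.le
  have hvpos : ∀ t ∈ Icc a r, 0 < v t := fun t ht =>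
    ht.2.eq_or_lt.elim (fun htr => htr ▸ hs) fun htr => lt_trans hs (habove t ⟨ht.1, htr⟩)
  have harrival := comp_eq_add hpos hint hr.1 (hv.mono (Icc_subset_Icc_right hr.2))
    (fun t ht => hode t (Ioo_subset_Ioo_right hr.2 ht)) hvpos
  linarith [hr.2]

end Positive

end descentTime

end

theorem ode_solution_decay_general (f : ℝ → ℝ) (hpos : ∀ s : ℝ, 0 < s → 0 < f s)
    (hint : ∀ s : ℝ, 0 < s → IntegrableOn (fun σ => 1 / f σ) (Set.Ici s))
    (hsurj : Set.SurjOn (descentTime f) (Set.Ioi 0) (Set.Ioi 0))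
    (Finv : ℝ → ℝ) (hFinv : Set.LeftInvOn Finv (descentTime f) (Set.Ioi 0))
    (T₁ : ℝ) (v : ℝ → ℝ) (hvT₁ : 0 < v T₁) (hvc : ContinuousOn v (Set.Ici T₁))
    (hode : ∀ t : ℝ, T₁ < t → HasDerivAt v (-(f (v t))) t) :
    (∀ t : ℝ, T₁ < t → t - T₁ ≤ descentTime f (v t) ∧ v t ≤ Finv (t - T₁)) ∧
    (∀ δ : ℝ, 0 < δ → ∀ t : ℝ, T₁ + descentTime f δ ≤ t → 0 < v t ∧ v t ≤ δ) := by
  have hunbdd : ¬ BddAbove (descentTime f '' Set.Ioi 0) :=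
    fun h => not_bddAbove_Ioi 0 (h.mono hsurj)
  have hvpos : ∀ t, T₁ ≤ t → 0 < v t := fun t ht =>
    descentTime.pos_of_hasDerivAt_neg hpos hint hunbdd ht (hvc.mono Set.Icc_subset_Ici_self)
      (fun x hx => hode x hx.1) hvT₁
  have hlower : ∀ t, T₁ < t → t - T₁ ≤ descentTime f (v t) := fun t ht => by
    rw [descentTime.comp_eq_add hpos hint ht.le (hvc.mono Set.Icc_subset_Ici_self)
      (fun x hx => hode x hx.1) (fun x hx => hvpos x hx.1)]
    exact le_add_of_nonneg_left (descentTime.nonneg hpos hvT₁)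
  have hupper : ∀ t, T₁ < t → ∀ s, 0 < s → descentTime f s ≤ t - T₁ → v t ≤ s :=
    fun t ht s hs hst => ((descentTime.strictAntiOn hpos hint).le_iff_ge hs (hvpos t ht.le)).1
      (hst.trans (hlower t ht))
  refine ⟨fun t ht => ⟨hlower t ht, ?_⟩, fun δ hδ t ht => ?_⟩
  · obtain ⟨s, hs, hst⟩ := hsurj (sub_pos.2 ht)
    rw [← hst, hFinv hs]
    exact hupper t ht s hs hst.le
  · have htT₁ : T₁ < t := (lt_add_of_pos_right T₁ (descentTime.pos hpos hint hδ)).trans_le ht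
    exact ⟨hvpos t htT₁.le, hupper t htT₁ δ hδ (le_sub_iff_add_le'.2 ht)⟩

theorem ode_solution_decay (f : ℝ → ℝ) (hf : ContDiff ℝ 1 f) (hf0 : f 0 = 0)
    (hpos : ∀ s : ℝ, 0 < s → 0 < f s)
    (hint : IntegrableOn (fun σ => 1 / f σ) (Set.Ici (1 : ℝ)))
    (F : ℝ → ℝ) (hF : ∀ s : ℝ, F s = ∫ σ in Set.Ici s, 1 / f σ)
    (hanti : StrictAntiOn F (Set.Ioi 0))
    (hbij : Set.BijOn F (Set.Ioi 0) (Set.Ioi 0))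
    (Finv : ℝ → ℝ) (hFinv : Set.InvOn Finv F (Set.Ioi 0) (Set.Ioi 0))
    (T₁ v₀ : ℝ) (hv₀ : 0 < v₀) (v : ℝ → ℝ)
    (hvc : ContinuousOn v (Set.Ici T₁)) (hvT₁ : v T₁ = v₀)
    (hode : ∀ t : ℝ, T₁ < t → HasDerivAt v (-(f (v t))) t) :
    (∀ t : ℝ, T₁ < t → t - T₁ ≤ F (v t) ∧ v t ≤ Finv (t - T₁)) ∧
    (∀ δ : ℝ, 0 < δ → ∀ t : ℝ, T₁ + F δ ≤ t → 0 < v t ∧ v t ≤ δ) := by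
  obtain rfl : F = descentTime f := funext hF
  have hcont : ContinuousOn (fun σ => 1 / f σ) (Set.Ioi 0) :=
    continuousOn_const.div hf.continuous.continuousOn fun σ hσ => (hpos σ hσ).ne'
  exact ode_solution_decay_general f hpos
    (fun _ hs => integrableOn_Ici_of_continuousOn_Ioi hcont hint hs) hbij.surjOn Finv hFinv.1
    T₁ v (hvT₁ ▸ hv₀) hvc hode
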